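/- Fix θ ∈ Θ_M° and let ψ_μ, ψ_σ, ψ_α, ψ_β denote the partial derivatives of the cumulant ψ(t;θ) = log φ(t;θ) with respect to μ, σ, α, β. If a = (a₁,a₂,a₃,a₄) ∈ ℝ⁴ satisfies a₁ψ_μ(t) + a₂ψ_σ(t) + a₃ψ_α(t) + a₄ψ_β(t) = 0 for all t ≠ 0, then a = 0; that is, the four cumulant derivatives are linearly independent as functions of t. This holds in all cases α ≠ 1, α = 1, β = 0 and β ≠ 0. -/

import Mathlib

open MeasureTheory Filter

noncomputable section

def ThetaInt : Set (Fin 4 → ℝ) :=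
  {θ | 0 < θ 1 ∧ θ 2 ∈ Set.Ioo (0:ℝ) 2 ∧ θ 3 ∈ Set.Ioo (-1:ℝ) 1}

/-- Cumulant (log characteristic function) of the continuous (M₀) parameterization,
with `θ = (μ, σ, α, β)`. -/
def psiM (θ : Fin 4 → ℝ) (t : ℝ) : ℂ :=
  if θ 2 = 1 then
    ((-(|θ 1 * t|) : ℝ) : ℂ)
      - Complex.I * (((2 * θ 3 / Real.pi) * (θ 1 * t) * Real.log |θ 1 * t| : ℝ) : ℂ)
      + Complex.I * ((θ 0 * t : ℝ) : ℂ)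
  else
    ((-(|θ 1 * t| ^ (θ 2)) : ℝ) : ℂ) *
        (1 + Complex.I * ((θ 3 * Real.sign t * Real.tan (Real.pi * θ 2 / 2)
            * (|θ 1 * t| ^ (1 - θ 2) - 1) : ℝ) : ℂ))
      + Complex.I * ((θ 0 * t : ℝ) : ℂ)

/-- Characteristic function of the (M₀) parameterization. -/
def phiM (θ : Fin 4 → ℝ) (t : ℝ) : ℂ := Complex.exp (psiM θ t)

/-- Stable density in the (M₀) parameterization, via Fourier inversion. -/
def fM (θ : Fin 4 → ℝ) (x : ℝ) : ℝ :=
  (1 / (2 * Real.pi)) *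
    (∫ t : ℝ, Complex.exp (-Complex.I * (t : ℂ) * (x : ℂ)) * phiM θ t).re

/-- Partial derivative of the density in parameter `i`. -/
def fP (i : Fin 4) (θ : Fin 4 → ℝ) (x : ℝ) : ℝ :=
  deriv (fun s => fM (Function.update θ i s) x) (θ i)

/-- Second partial derivative of the density in parameters `i`, `j`. -/
def fPP (i j : Fin 4) (θ : Fin 4 → ℝ) (x : ℝ) : ℝ :=
  deriv (fun s => fP i (Function.update θ j s) x) (θ j)

/-- Derivative of the density in `x`. -/
def fX (θ : Fin 4 → ℝ) (x : ℝ) : ℝ := deriv (fun y => fM θ y) x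

/-- Mixed derivative `∂²f/∂x∂θᵢ`. -/
def fPX (i : Fin 4) (θ : Fin 4 → ℝ) (x : ℝ) : ℝ := deriv (fun y => fP i θ y) x

/-- Score functions. -/
def ellP (i : Fin 4) (θ : Fin 4 → ℝ) (x : ℝ) : ℝ := fP i θ x / fM θ x

/-- Derivative of the score in `x`. -/
def ellPX (i : Fin 4) (θ : Fin 4 → ℝ) (x : ℝ) : ℝ := deriv (fun y => ellP i θ y) x

/-- Derivative of the score `ℓ_{θᵢ}` in the parameter `θⱼ`. -/
def ellPP (i j : Fin 4) (θ : Fin 4 → ℝ) (x : ℝ) : ℝ :=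
  deriv (fun s => ellP i (Function.update θ j s) x) (θ j)

/-- `h = O(r)` as `|x| → ∞`. -/
def IsBigOAtInfty (h r : ℝ → ℝ) : Prop :=
  ∃ c > 0, ∃ M > 0, ∀ x : ℝ, M ≤ |x| → |h x| ≤ c * r x


/-- Partial derivative of the cumulant `ψ` in the parameter `θᵢ` (at `α = 1` this is the
derivative of the continuous parameterization, i.e. the limit of the `α ≠ 1` expressions). -/
def psiP (i : Fin 4) (θ : Fin 4 → ℝ) (t : ℝ) : ℂ :=
  deriv (fun s => psiM (Function.update θ i s) t) (θ i)

end


noncomputable def KK (α u : ℝ) : ℝ :=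
  if α = 1 then (2 / Real.pi) * u * Real.log u else Real.tan (Real.pi * α / 2) * (u - u ^ α)

lemma psi_eq (θ : Fin 4 → ℝ) (t : ℝ) (h1 : 0 < θ 1) (ht : 0 < t) :
    psiM θ t = ((-((θ 1 * t) ^ (θ 2)) : ℝ) : ℂ)
      + Complex.I * ((-(θ 3) * KK (θ 2) (θ 1 * t) + θ 0 * t : ℝ) : ℂ) := by
  have hu : 0 < θ 1 * t := mul_pos h1 ht
  unfold psiM KK
  rw [abs_of_pos hu, Real.sign_of_pos ht]
  split_ifs with h
  · rw [h, Real.rpow_one]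
    push_cast
    ring
  · have : (θ 1 * t) ^ (1 - θ 2) * (θ 1 * t) ^ (θ 2) = θ 1 * t := by
      rw [← Real.rpow_add hu]; simp
    generalize (θ 1 * t) ^ (1 - θ 2) = y at *
    generalize (θ 1 * t) ^ (θ 2) = z at *
    rw [← this]
    push_cast
    ring

lemma deriv_split {f : ℝ → ℂ} {R J : ℝ → ℝ} {r j x : ℝ} (hR : HasDerivAt R r x)
    (hJ : HasDerivAt J j x) (hf : ∀ᶠ s in nhds x, f s = (R s : ℂ) + Complex.I * (J s : ℂ)) :
    deriv f x = (r : ℂ) + Complex.I * (j : ℂ) := by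
  have := (hR.ofReal_comp.add (hJ.ofReal_comp.const_mul Complex.I)).congr_of_eventuallyEq hf
  exact this.deriv

lemma diff_dslope {f : ℝ → ℝ} {x : ℝ} (hf : AnalyticAt ℝ f x) :
    DifferentiableAt ℝ (dslope f x) x := by
  obtain ⟨p, hp⟩ := hf
  exact hp.has_fpower_series_dslope_fslope.analyticAt.differentiableAt

lemma cos_ne {α : ℝ} (h0 : 0 < α) (h2 : α < 2) (h : α ≠ 1) : Real.cos (Real.pi * α / 2) ≠ 0 := by
  have hpi := Real.pi_pos
  rcases lt_or_gt_of_ne h with h | h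
  · exact (Real.cos_pos_of_mem_Ioo ⟨by nlinarith, by nlinarith⟩).ne'
  · exact (Real.cos_neg_of_pi_div_two_lt_of_lt (by nlinarith) (by nlinarith)).ne

lemma KK_diff_alpha {α u : ℝ} (h0 : 0 < α) (h2 : α < 2) (hu : 0 < u) :
    DifferentiableAt ℝ (fun s => KK s u) α := by
  have hpow : ∀ s, HasDerivAt (fun s : ℝ => u - u ^ s) (-(u ^ s * Real.log u)) s := by
    intro s
    simpa using (Real.hasStrictDerivAt_const_rpow hu s).hasDerivAt.const_sub u
  by_cases h : α = 1
  · subst h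
    have hcos : HasDerivAt (fun s : ℝ => Real.cos (Real.pi * s / 2)) (-(Real.pi / 2)) 1 := by
      have h1 : HasDerivAt (fun s : ℝ => Real.pi * s / 2) (Real.pi * 1 / 2) 1 :=
        ((hasDerivAt_id (1:ℝ)).const_mul Real.pi).div_const 2
      have := h1.cos
      simpa using this
    have hc : AnalyticAt ℝ (fun s : ℝ => Real.cos (Real.pi * s / 2)) 1 := by fun_prop
    have hg : AnalyticAt ℝ (fun s : ℝ => u - u ^ s) 1 := by
      have : (fun s : ℝ => u - u ^ s) = fun s => u - Real.exp (Real.log u * s) := by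
        funext s; rw [Real.rpow_def_of_pos hu]
      rw [this]
      fun_prop
    have hd : dslope (fun s : ℝ => Real.cos (Real.pi * s / 2)) 1 1 = -(Real.pi / 2) := by
      rw [dslope_same, hcos.deriv]
    have key : DifferentiableAt ℝ (fun s => Real.sin (Real.pi * s / 2) *
        (dslope (fun s : ℝ => u - u ^ s) 1 s) /
          (dslope (fun s : ℝ => Real.cos (Real.pi * s / 2)) 1 s)) 1 := by
      refine DifferentiableAt.div (DifferentiableAt.mul (by fun_prop) (diff_dslope hg))
        (diff_dslope hc) ?_
      rw [hd]
      have := Real.pi_pos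
      linarith
    convert key using 2 with s
    have hpi := Real.pi_pos
    unfold KK
    split_ifs with hs
    · subst hs
      rw [hd, dslope_same, (hpow 1).deriv]
      simp
      field_simp
    · rw [dslope_of_ne _ hs, dslope_of_ne _ hs, slope_def_field, slope_def_field, Real.tan_eq_sin_div_cos]
      have : s - 1 ≠ 0 := sub_ne_zero.2 hs
      simp
      field_simp
  · have hev : (fun s => KK s u) =ᶠ[nhds α]
        fun s => Real.tan (Real.pi * s / 2) * (u - u ^ s) := by
      filter_upwards [isOpen_ne.mem_nhds h] with s hs
      simp only [KK, if_neg hs]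
    refine DifferentiableAt.congr_of_eventuallyEq ?_ hev
    refine DifferentiableAt.mul ?_ (hpow α).differentiableAt
    exact (Real.differentiableAt_tan.2 (cos_ne h0 h2 h)).comp α
      (f := fun s : ℝ => Real.pi * s / 2) (by fun_prop)

lemma KK_diff_u {α u : ℝ} (hu : 0 < u) : DifferentiableAt ℝ (fun v => KK α v) u := by
  unfold KK
  split_ifs with h
  · exact (by fun_prop : DifferentiableAt ℝ (fun v : ℝ => 2 / Real.pi * v) u).mul
      (Real.differentiableAt_log hu.ne')
  · exact (differentiableAt_id.sub
      (Real.differentiableAt_rpow_const_of_ne α hu.ne')).const_mul _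

lemma KK_one (α : ℝ) : KK α 1 = 0 := by simp [KK]

lemma KK_e {α : ℝ} (h0 : 0 < α) (h2 : α < 2) : KK α (Real.exp 1) ≠ 0 := by
  have hpi := Real.pi_pos
  unfold KK
  split_ifs with h
  · rw [Real.log_exp]; positivity
  · refine mul_ne_zero ?_ ?_
    · rw [Real.tan_eq_sin_div_cos]
      exact div_ne_zero (Real.sin_pos_of_pos_of_lt_pi (by positivity) (by nlinarith)).ne'
        (cos_ne h0 h2 h)
    · rw [← Real.exp_mul, sub_ne_zero]
      intro h'
      exact h (by simpa using (Real.exp_injective h').symm)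

/-- consequence of the relation at a positive argument -/
lemma rel (θ : Fin 4 → ℝ) (hθ : θ ∈ ThetaInt) (a : Fin 4 → ℝ) (t : ℝ) (ht : 0 < t)
    (h : ∑ i : Fin 4, (a i : ℂ) * psiP i θ t = 0) :
    (a 1 * (t * θ 2 * (θ 1 * t) ^ (θ 2 - 1)) + a 2 * ((θ 1 * t) ^ (θ 2) * Real.log (θ 1 * t)) = 0)
    ∧ (a 1 = 0 → a 2 = 0 → a 0 * t = a 3 * KK (θ 2) (θ 1 * t)) := by
  obtain ⟨h1, ⟨h20, h22⟩, -⟩ := hθ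
  have hu : 0 < θ 1 * t := mul_pos h1 ht
  have p0 : psiP 0 θ t = ((0 : ℝ) : ℂ) + Complex.I * (t : ℂ) := by
    refine deriv_split (R := fun _ => -((θ 1 * t) ^ (θ 2)))
      (J := fun s => -(θ 3) * KK (θ 2) (θ 1 * t) + s * t) (hasDerivAt_const _ _) ?_ ?_
    · simpa using ((hasDerivAt_id (θ 0)).mul_const t).const_add (-(θ 3) * KK (θ 2) (θ 1 * t))
    · refine Eventually.of_forall fun s => ?_
      rw [psi_eq _ _ (by simpa using h1) ht]
      simp
  have p3 : psiP 3 θ t = ((0 : ℝ) : ℂ) + Complex.I * ((-KK (θ 2) (θ 1 * t) : ℝ) : ℂ) := by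
    refine deriv_split (R := fun _ => -((θ 1 * t) ^ (θ 2)))
      (J := fun s => -s * KK (θ 2) (θ 1 * t) + θ 0 * t) (hasDerivAt_const _ _) ?_ ?_
    · simpa using ((hasDerivAt_id (θ 3)).neg.mul_const (KK (θ 2) (θ 1 * t))).add_const (θ 0 * t)
    · refine Eventually.of_forall fun s => ?_
      rw [psi_eq _ _ (by simpa using h1) ht]
      simp
  have p1 : ∃ j : ℝ, psiP 1 θ t =
      ((-(t * θ 2 * (θ 1 * t) ^ (θ 2 - 1)) : ℝ) : ℂ) + Complex.I * (j : ℂ) := by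
    have hJ : DifferentiableAt ℝ (fun s => -(θ 3) * KK (θ 2) (s * t) + θ 0 * t) (θ 1) := by
      refine DifferentiableAt.add_const _ (DifferentiableAt.const_mul ?_ _)
      exact (KK_diff_u hu).comp (θ 1) (f := fun s : ℝ => s * t) (by fun_prop)
    refine ⟨_, deriv_split (R := fun s => -((s * t) ^ (θ 2))) ?_ hJ.hasDerivAt ?_⟩
    · have := (((hasDerivAt_id (θ 1)).mul_const t).rpow_const (p := θ 2) (Or.inl hu.ne'))
      simp only [id, one_mul] at this
      exact this.neg
    · filter_upwards [lt_mem_nhds h1] with s hs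
      rw [psi_eq _ _ (by simpa using hs) ht]
      simp
  have p2 : ∃ j : ℝ, psiP 2 θ t =
      ((-((θ 1 * t) ^ (θ 2) * Real.log (θ 1 * t)) : ℝ) : ℂ) + Complex.I * (j : ℂ) := by
    have hJ : DifferentiableAt ℝ (fun s => -(θ 3) * KK s (θ 1 * t) + θ 0 * t) (θ 2) :=
      DifferentiableAt.add_const _ (DifferentiableAt.const_mul (KK_diff_alpha h20 h22 hu) _)
    refine ⟨_, deriv_split (R := fun s => -((θ 1 * t) ^ s)) ?_ hJ.hasDerivAt ?_⟩
    · exact (Real.hasStrictDerivAt_const_rpow hu (θ 2)).hasDerivAt.neg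
    · refine Eventually.of_forall fun s => ?_
      rw [psi_eq _ _ (by simpa using h1) ht]
      simp
  obtain ⟨j1, p1⟩ := p1
  obtain ⟨j2, p2⟩ := p2
  rw [Fin.sum_univ_four, p0, p1, p2, p3] at h
  generalize t * θ 2 * (θ 1 * t) ^ (θ 2 - 1) = A at *
  generalize (θ 1 * t) ^ (θ 2) * Real.log (θ 1 * t) = B at *
  generalize KK (θ 2) (θ 1 * t) = C at *
  have hre := congrArg Complex.re h
  have him := congrArg Complex.im h
  simp at hre him
  refine ⟨by linarith, fun e1 e2 => ?_⟩
  rw [e1, e2] at him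
  linarith

/-- The cumulant derivatives `ψ_μ, ψ_σ, ψ_α, ψ_β` are linearly independent
as functions of `t`: if a real linear combination of them vanishes for all `t ≠ 0`, then all
coefficients vanish.  This holds for every `θ ∈ Θ_M°` (in all cases `α ≠ 1`, `α = 1`,
`β = 0`, `β ≠ 0`). -/
theorem cumulant_derivs_linearIndependent
    (θ : Fin 4 → ℝ) (hθ : θ ∈ ThetaInt) (a : Fin 4 → ℝ)
    (h : ∀ t : ℝ, t ≠ 0 → ∑ i : Fin 4, (a i : ℂ) * psiP i θ t = 0) :
    a = 0 := by
  obtain ⟨h1, ⟨h20, h22⟩, -⟩ := id hθ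
  have t1 : 0 < 1 / θ 1 := by positivity
  have t2 : 0 < Real.exp 1 / θ 1 := by positivity
  have e1 : θ 1 * (1 / θ 1) = 1 := by field_simp
  have e2 : θ 1 * (Real.exp 1 / θ 1) = Real.exp 1 := by field_simp
  obtain ⟨r1, i1⟩ := rel θ hθ a _ t1 (h _ t1.ne')
  obtain ⟨r2, i2⟩ := rel θ hθ a _ t2 (h _ t2.ne')
  rw [e1] at r1 i1
  rw [e2] at r2 i2
  have a1 : a 1 = 0 := by
    simp only [Real.one_rpow, Real.log_one, mul_zero, add_zero, mul_one] at r1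
    exact (mul_eq_zero.1 r1).resolve_right (by positivity)
  have a2 : a 2 = 0 := by
    rw [a1, Real.log_exp, zero_mul, zero_add, mul_one] at r2
    exact (mul_eq_zero.1 r2).resolve_right (by positivity)
  have a0 : a 0 = 0 := by
    have := i1 a1 a2
    rw [KK_one, mul_zero] at this
    exact (mul_eq_zero.1 this).resolve_right t1.ne'
  have a3 : a 3 = 0 := by
    have := i2 a1 a2
    rw [a0, zero_mul] at this
    exact (mul_eq_zero.1 this.symm).resolve_right (KK_e h20 h22)
  funext i
  fin_cases i <;> simp [a0, a1, a2, a3]
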